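/- Let n ≥ 4, let 0 < Z ≤ 2^n and set a = ⌊log_2 Z⌋. Let s and c be integers with 2^n - 2^s < c < 2^n - 2^{s-1} and s > a. Then the number of 2^n-periodic binary sequences S with odd Hamming weight in one period, L_1(S) = c, and L_{1;Z}(S) = c is exactly Z · 2^{c-1}. -/

import Mathlib

/-- Generating polynomial `S^N(x) = s_0 + s_1 x + ... + s_{N-1} x^{N-1}` of one period
of an `N`-periodic binary sequence. -/
noncomputable def genPoly {N : ℕ} (S : Fin N → ZMod 2) : Polynomial (ZMod 2) :=
  ∑ i : Fin N, Polynomial.C (S i) * Polynomial.X ^ (i : ℕ)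

/-- Linear complexity `L(S) = N - deg (gcd (1 - x^N, S^N(x)))`. -/
noncomputable def linComp {N : ℕ} (S : Fin N → ZMod 2) : ℕ :=
  N - (EuclideanDomain.gcd (1 - Polynomial.X ^ N) (genPoly S)).natDegree

/-- Hamming weight of one period of an `N`-periodic binary sequence. -/
def wt {N : ℕ} (T : Fin N → ZMod 2) : ℕ :=
  (Finset.univ.filter (fun i => T i ≠ 0)).card

/-- `k`-error linear complexity `L_{N,k}(S)`. -/
noncomputable def errLC {N : ℕ} (S : Fin N → ZMod 2) (k : ℕ) : ℕ :=
  sInf {c | ∃ T : Fin N → ZMod 2, wt T ≤ k ∧ linComp (S + T) = c}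

/-- `k`-error linear complexity with a zone of length `Z`: `L_{N,k;Z}(S)`. -/
noncomputable def errLCZone {N : ℕ} (S : Fin N → ZMod 2) (k Z : ℕ) : ℕ :=
  sInf {c | ∃ T : Fin N → ZMod 2, wt T ≤ k ∧ (∀ i : Fin N, Z ≤ (i : ℕ) → T i = 0) ∧
    linComp (S + T) = c}

/-- `E_1(j)`: the sequence whose only nonzero term in one period is a `1` at position `j`. -/
def E1 {N : ℕ} (j : Fin N) : Fin N → ZMod 2 :=
  fun i => if i = j then 1 else 0

open Polynomial in
lemma gp_add {N : ℕ} (S T : Fin N → ZMod 2) : genPoly (S + T) = genPoly S + genPoly T := by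
  simp [genPoly, add_mul, Finset.sum_add_distrib]

open Polynomial in
lemma gp_E1 {N : ℕ} (j : Fin N) : genPoly (E1 j) = (X : (ZMod 2)[X]) ^ (j : ℕ) := by
  simp only [genPoly, E1]
  rw [Finset.sum_eq_single j] <;> simp +contextual

open Polynomial in
lemma gp_coeff {N : ℕ} (S : Fin N → ZMod 2) (i : Fin N) : (genPoly S).coeff i = S i := by
  simp only [genPoly, finsetSum_coeff, coeff_C_mul, coeff_X_pow]
  rw [Finset.sum_eq_single i]
  · simp
  · intro b _ hb
    have : (i : ℕ) ≠ b := fun h => hb (Fin.ext h.symm)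
    simp [this]
  · simp

open Polynomial in
lemma gp_inj {N : ℕ} : Function.Injective (genPoly (N := N)) := by
  intro S T h
  funext i
  rw [← gp_coeff S, h, gp_coeff]

open Polynomial in
lemma gp_deg {N : ℕ} (S : Fin N → ZMod 2) : (genPoly S).degree < N := by
  unfold genPoly
  refine lt_of_le_of_lt (degree_sum_le _ _) ?_
  refine (Finset.sup_lt_iff (WithBot.bot_lt_coe N)).2 ?_
  intro i _
  refine lt_of_le_of_lt (degree_C_mul_X_pow_le _ _) ?_
  exact WithBot.coe_lt_coe.2 i.2

open Polynomial in
lemma gp_surj {N : ℕ} (p : (ZMod 2)[X]) (hp : p.degree < N) :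
    ∃ S : Fin N → ZMod 2, genPoly S = p := by
  refine ⟨fun i => p.coeff i, ?_⟩
  ext k
  by_cases hk : k < N
  · exact gp_coeff (fun i : Fin N => p.coeff i) ⟨k, hk⟩
  · have hk' : (N : WithBot ℕ) ≤ k := by exact_mod_cast (not_lt.mp hk)
    rw [coeff_eq_zero_of_degree_lt (lt_of_lt_of_le (gp_deg _) hk'),
      coeff_eq_zero_of_degree_lt (lt_of_lt_of_le hp hk')]

/-- divisibility of the generating polynomial -/
def DV {N : ℕ} (m : ℕ) (R : Fin N → ZMod 2) : Prop :=
  (Polynomial.X - Polynomial.C 1 : Polynomial (ZMod 2)) ^ m ∣ genPoly R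

open Polynomial in
lemma two_pow_factor (n : ℕ) :
    (X : (ZMod 2)[X]) ^ (2 ^ n) - 1 = (X - C 1) ^ (2 ^ n) := by
  rw [C_1, sub_pow_char_pow, one_pow]

open Polynomial in
lemma linComp_le_iff {n : ℕ} (R : Fin (2^n) → ZMod 2) (m : ℕ) (hm : m ≤ 2^n) :
    linComp R ≤ 2^n - m ↔ DV m R := by
  unfold linComp DV
  set g := EuclideanDomain.gcd (1 - X ^ (2^n)) (genPoly R) with hg
  have h1 : (1 - X ^ (2^n) : (ZMod 2)[X]) = -(X - C 1) ^ (2^n) := by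
    rw [← two_pow_factor]; ring
  have hgd : g ∣ (X - C 1 : (ZMod 2)[X]) ^ (2^n) := by
    have := EuclideanDomain.gcd_dvd_left (1 - X ^ (2^n)) (genPoly R)
    rw [h1, dvd_neg] at this
    rw [hg, h1]; exact this
  obtain ⟨d, hd, hass⟩ := (dvd_prime_pow (prime_X_sub_C (1 : ZMod 2)) _).1 hgd
  have hdeg : g.natDegree = d := by
    rw [natDegree_eq_of_degree_eq (degree_eq_degree_of_associated hass), natDegree_pow,
      natDegree_X_sub_C, mul_one]
  have key : (X - C 1 : (ZMod 2)[X]) ^ m ∣ genPoly R ↔ m ≤ d := by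
    have e1 : (X - C 1 : (ZMod 2)[X]) ^ m ∣ genPoly R ↔ (X - C 1 : (ZMod 2)[X]) ^ m ∣ g := by
      constructor
      · intro h
        refine EuclideanDomain.dvd_gcd ?_ h
        rw [h1, dvd_neg]
        exact pow_dvd_pow _ hm
      · intro h
        exact h.trans (EuclideanDomain.gcd_dvd_right _ _)
    rw [e1, hass.dvd_iff_dvd_right,
      pow_dvd_pow_iff (X_sub_C_ne_zero 1) (prime_X_sub_C (1 : ZMod 2)).not_unit]
  rw [key, hdeg]
  omega

open Polynomial in
lemma odd_iff {N : ℕ} (S : Fin N → ZMod 2) : Odd (wt S) ↔ ¬ DV 1 S := by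
  have h : (genPoly S).eval 1 = (wt S : ZMod 2) := by
    simp only [genPoly, eval_finsetSum, wt, eval_mul, eval_C, eval_pow, eval_X, one_pow, mul_one]
    rw [Finset.card_filter]
    push_cast
    refine Finset.sum_congr rfl fun i _ => ?_
    generalize S i = x
    revert x
    decide
  unfold DV
  rw [pow_one, dvd_iff_isRoot, IsRoot.def, h, ← ZMod.natCast_ne_zero_iff_odd]

lemma wt_E1 {N : ℕ} (j : Fin N) : wt (E1 j) ≤ 1 := by
  unfold wt E1
  rw [Finset.card_le_one]
  intro a ha b hb
  simp at ha hb
  rw [ha, hb]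

lemma wt_le_one {N : ℕ} (T : Fin N → ZMod 2) (h : wt T ≤ 1) : T = 0 ∨ ∃ j, T = E1 j := by
  by_cases h0 : T = 0
  · exact Or.inl h0
  right
  obtain ⟨j, hj⟩ := Function.ne_iff.1 h0
  refine ⟨j, ?_⟩
  unfold wt at h
  rw [Finset.card_le_one] at h
  funext i
  unfold E1
  split_ifs with hi
  · subst hi
    revert hj
    simp only [Pi.zero_apply]
    generalize T i = x
    revert x
    decide
  · by_contra hne
    exact hi (h i (by simpa using hne) j (by simpa using hj))

lemma add_self_fn {N : ℕ} (T : Fin N → ZMod 2) : T + T = 0 := by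
  funext i
  exact CharTwo.add_self_eq_zero _

lemma DV.add {N m : ℕ} {S T : Fin N → ZMod 2} (h : DV m S) (h' : DV m T) : DV m (S + T) := by
  unfold DV at *
  rw [gp_add]
  exact dvd_add h h'

lemma DV.mono {N m k : ℕ} {S : Fin N → ZMod 2} (h : DV m S) (hk : k ≤ m) : DV k S :=
  (pow_dvd_pow _ hk).trans h

open Polynomial in
lemma xt_dvd (s t : ℕ) (h : 2^s ∣ t) :
    (X - C 1 : (ZMod 2)[X]) ^ (2^s) ∣ X ^ t - 1 := by
  obtain ⟨u, rfl⟩ := h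
  rw [← two_pow_factor, pow_mul]
  exact sub_one_dvd_pow_sub_one _ _

open Polynomial in
lemma xt_ndvd (s t m : ℕ) (ht : t ≠ 0) (h : ¬ 2^s ∣ t) (hm : 2^(s-1) < m) :
    ¬ (X - C 1 : (ZMod 2)[X]) ^ m ∣ X ^ t - 1 := by
  obtain ⟨v, u, hu, rfl⟩ := Nat.exists_eq_two_pow_mul_odd ht
  have hv : v < s := by
    by_contra hc
    exact h (Dvd.dvd.mul_right (pow_dvd_pow 2 (not_lt.mp hc)) u)
  have hvm : 2^v < m := lt_of_le_of_lt (Nat.pow_le_pow_right (by norm_num) (by omega)) hm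
  intro hd
  have e : (X : (ZMod 2)[X]) ^ (2^v * u) - 1
      = (X - C 1) ^ (2^v) * (∑ i ∈ Finset.range u, X ^ i) ^ (2^v) := by
    rw [← mul_pow, C_1, mul_geom_sum, sub_pow_char_pow, one_pow, ← pow_mul, mul_comm]
  have hd' := (pow_dvd_pow (X - C 1 : (ZMod 2)[X]) (Nat.succ_le_of_lt hvm)).trans hd
  rw [e, Nat.succ_eq_add_one, pow_succ,
    mul_dvd_mul_iff_left (pow_ne_zero _ (X_sub_C_ne_zero 1))] at hd'
  have := (prime_X_sub_C (1 : ZMod 2)).dvd_of_dvd_pow hd'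
  rw [dvd_iff_isRoot, IsRoot.def] at this
  simp [eval_finsetSum] at this
  exact (ZMod.natCast_ne_zero_iff_odd.2 hu) this

open Polynomial in
lemma EE_aux {N : ℕ} (i j : Fin N) (hij : i ≤ j) (m : ℕ) :
    DV m (E1 i + E1 j) ↔ (X - C 1 : (ZMod 2)[X]) ^ m ∣ X ^ ((j : ℕ) - i) - 1 := by
  unfold DV
  have hle : (i : ℕ) ≤ j := hij
  have e : genPoly (E1 i + E1 j) = (X : (ZMod 2)[X]) ^ (i : ℕ) * (X ^ ((j : ℕ) - i) - 1) := by
    rw [gp_add, gp_E1, gp_E1, mul_sub, ← pow_add, Nat.add_sub_cancel' hle, mul_one,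
      CharTwo.sub_eq_add, add_comm]
  rw [e]
  have hc : IsCoprime ((X - C 1 : (ZMod 2)[X]) ^ m) (X ^ (i : ℕ)) := by
    apply IsCoprime.pow
    refine ⟨-1, 1, ?_⟩
    rw [C_1]; ring
  exact ⟨fun h => hc.dvd_of_dvd_mul_left h, fun h => Dvd.dvd.mul_left h _⟩

/-- dichotomy -/
lemma EE_dich {N : ℕ} (s : ℕ) (i j : Fin N) :
    DV (2^s) (E1 i + E1 j) ∨ ∀ m, 2^(s-1) < m → ¬ DV m (E1 i + E1 j) := by
  wlog hij : i ≤ j generalizing i j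
  · rw [add_comm]; exact this j i (le_of_not_ge hij)
  by_cases h : 2^s ∣ (j : ℕ) - i
  · left
    rw [EE_aux i j hij]
    exact xt_dvd s _ h
  · right
    intro m hm
    rw [EE_aux i j hij]
    refine xt_ndvd s _ m ?_ h hm
    intro h0; rw [h0] at h; exact h (dvd_zero _)

lemma EE_ne {N : ℕ} (s m : ℕ) (i j : Fin N) (hi : (i : ℕ) < 2^s) (hj : (j : ℕ) < 2^s)
    (hm : 2^(s-1) < m) (h : DV m (E1 i + E1 j)) : i = j := by
  wlog hij : i ≤ j generalizing i j
  · rw [add_comm] at h; exact (this j i hj hi h (le_of_not_ge hij)).symm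
  rw [EE_aux i j hij] at h
  by_contra hne
  have hlt : (i : ℕ) < j := lt_of_le_of_ne hij (fun h => hne (Fin.ext h))
  refine xt_ndvd s _ m (by omega) ?_ hm h
  exact Nat.not_dvd_of_pos_of_lt (by omega) (by omega)

open Polynomial in
lemma DV_card {N : ℕ} (m : ℕ) (hm : m ≤ N) :
    {R : Fin N → ZMod 2 | DV m R}.ncard = 2^(N - m) := by
  have hmon : ((X - C 1 : (ZMod 2)[X]) ^ m).degree = m := by
    rw [degree_pow, degree_X_sub_C]; simp
  have hex : ∀ Q : Fin (N - m) → ZMod 2, ∃ R : Fin N → ZMod 2,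
      genPoly R = (X - C 1) ^ m * genPoly Q := by
    intro Q
    apply gp_surj
    rw [degree_mul, hmon]
    have hq := gp_deg Q
    by_cases h0 : genPoly Q = 0
    · rw [h0]; simp
    rw [degree_eq_natDegree h0] at hq ⊢
    have hq' : (genPoly Q).natDegree < N - m := by exact_mod_cast hq
    have : m + (genPoly Q).natDegree < N := by omega
    exact_mod_cast this
  choose f hf using hex
  have hinj : Function.Injective f := by
    intro Q Q' h
    have h2 := hf Q
    rw [h, hf Q'] at h2
    exact gp_inj (mul_left_cancel₀ (pow_ne_zero _ (X_sub_C_ne_zero 1)) h2).symm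
  have hr : {R : Fin N → ZMod 2 | DV m R} = Set.range f := by
    ext R
    constructor
    · rintro ⟨q, hq⟩
      have hdq : q.degree < (N - m : ℕ) := by
        by_cases h0 : q = 0
        · rw [h0, degree_zero]; exact WithBot.bot_lt_coe _
        have hd := gp_deg R
        rw [hq, degree_mul, hmon, degree_eq_natDegree h0] at hd
        rw [degree_eq_natDegree h0]
        have hd' : m + q.natDegree < N := by exact_mod_cast hd
        have : q.natDegree < N - m := by omega
        exact_mod_cast this
      obtain ⟨Q, hQ⟩ := gp_surj q hdq
      exact ⟨Q, gp_inj (by rw [hf, hQ, hq])⟩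
    · rintro ⟨Q, rfl⟩
      exact ⟨genPoly Q, hf Q⟩
  rw [hr, ← Set.image_univ, Set.ncard_image_of_injective _ hinj, Set.ncard_univ]
  simp

lemma linComp_eq_iff {n : ℕ} (R : Fin (2^n) → ZMod 2) (c : ℕ) (hc0 : 0 < c) (hc : c ≤ 2^n) :
    linComp R = c ↔ DV (2^n - c) R ∧ ¬ DV (2^n - c + 1) R := by
  have a := linComp_le_iff R (2^n - c) (by omega)
  have b := linComp_le_iff R (2^n - c + 1) (by omega)
  rw [← a, ← b]
  omega

lemma lc_card {n : ℕ} (c : ℕ) (hc0 : 0 < c) (hc : c ≤ 2^n) :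
    {R : Fin (2^n) → ZMod 2 | linComp R = c}.ncard = 2^(c-1) := by
  have e : {R : Fin (2^n) → ZMod 2 | linComp R = c} =
      {R | DV (2^n - c) R} \ {R | DV (2^n - c + 1) R} := by
    ext R; exact linComp_eq_iff R c hc0 hc
  have hsub : {R : Fin (2^n) → ZMod 2 | DV (2^n - c + 1) R} ⊆ {R | DV (2^n - c) R} :=
    fun R h => DV.mono h (by omega)
  rw [e, Set.ncard_diff hsub, DV_card _ (by omega), DV_card _ (by omega)]
  have h1 : 2^n - (2^n - c) = (c - 1) + 1 := by omega
  have h2 : 2^n - (2^n - c + 1) = c - 1 := by omega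
  rw [h1, h2, pow_succ]
  omega

/-- Case `s > a`: exactly `Z · 2^{c-1}` odd-weight sequences with `L_1(S) = c`
satisfy `L_{1;Z}(S) = c`. -/
theorem stmt10 (n Z s c : ℕ) (hn : 4 ≤ n) (hZ0 : 0 < Z) (hZ : Z ≤ 2^n)
    (h1 : 2^n - 2^s < c) (h2 : c < 2^n - 2^(s-1)) (hsa : Nat.log 2 Z < s) :
    {S : Fin (2^n) → ZMod 2 | Odd (wt S) ∧ errLC S 1 = c ∧ errLCZone S 1 Z = c}.ncard
      = Z * 2^(c - 1) := by
  have hZs : Z < 2^s := Nat.lt_pow_of_log_lt (by norm_num) hsa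
  have hpos : 0 < 2^(s-1) := by positivity
  have hc0 : 0 < c := by omega
  have hcN : c ≤ 2^n := by omega
  have hm : 2^(s-1) < 2^n - c := by omega
  have hm' : 2^n - c + 1 ≤ 2^s := by omega
  have hset : {S : Fin (2^n) → ZMod 2 | Odd (wt S) ∧ errLC S 1 = c ∧ errLCZone S 1 Z = c} =
      (fun p : Fin Z × (Fin (2^n) → ZMod 2) => E1 (Fin.castLE hZ p.1) + p.2) ''
        (Set.univ ×ˢ {R | linComp R = c}) := by
    ext S
    constructor
    · rintro ⟨ho, -, hz⟩
      have hne : {c | ∃ T : Fin (2^n) → ZMod 2, wt T ≤ 1 ∧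
          (∀ i : Fin (2^n), Z ≤ (i : ℕ) → T i = 0) ∧ linComp (S + T) = c}.Nonempty :=
        ⟨_, 0, by simp [wt], by simp, rfl⟩
      have hmem := Nat.sInf_mem hne
      obtain ⟨T, hT, hTz, hL⟩ := hmem
      have hL' : linComp (S + T) = c := hL.trans hz
      rcases wt_le_one T hT with rfl | ⟨j, rfl⟩
      · exfalso
        rw [add_zero, linComp_eq_iff _ c hc0 hcN] at hL'
        exact (odd_iff S).1 ho (hL'.1.mono (by omega))
      · have hj : (j : ℕ) < Z := by
          by_contra hc
          have := hTz j (not_lt.mp hc)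
          simp [E1] at this
        refine ⟨(⟨j, hj⟩, S + E1 j), ⟨trivial, hL'⟩, ?_⟩
        have : Fin.castLE hZ ⟨j, hj⟩ = j := rfl
        simp only [this]
        rw [add_comm S, ← add_assoc, add_self_fn, zero_add]
    · rintro ⟨⟨j, R⟩, ⟨-, hR⟩, rfl⟩
      simp only [Set.mem_setOf_eq] at hR ⊢
      set J : Fin (2^n) := Fin.castLE hZ j with hJ
      have hRJ : E1 J + R + E1 J = R := by
        rw [add_comm, ← add_assoc, add_self_fn, zero_add]
      obtain ⟨hR1, hR2⟩ := (linComp_eq_iff _ c hc0 hcN).1 hR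
      have hodd : ¬ DV 1 (E1 J + R) := by
        intro h
        have h3 := h.add (hR1.mono (k := 1) (by omega))
        rw [add_assoc, add_self_fn, add_zero] at h3
        unfold DV at h3
        rw [pow_one, Polynomial.dvd_iff_isRoot, gp_E1] at h3
        simp at h3
      have hlow : ∀ T : Fin (2^n) → ZMod 2, wt T ≤ 1 → c ≤ linComp (E1 J + R + T) := by
        intro T hT
        by_contra hlt
        have hD : DV (2^n - c + 1) (E1 J + R + T) := by
          rw [← linComp_le_iff _ _ (by omega)]
          omega
        rcases wt_le_one T hT with rfl | ⟨i, rfl⟩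
        · rw [add_zero] at hD
          exact hodd (hD.mono (by omega))
        · have e : E1 J + R + E1 i = (E1 J + E1 i) + R := by abel
          rw [e] at hD
          rcases EE_dich s J i with h | h
          · have := (h.mono hm').add hD
            rw [← add_assoc, add_self_fn, zero_add] at this
            exact hR2 this
          · have := (hD.mono (k := 2^n - c) (by omega)).add hR1
            rw [add_assoc, add_self_fn, add_zero] at this
            exact h _ hm this
      have hz0 : ∀ i : Fin (2^n), Z ≤ (i : ℕ) → E1 J i = 0 := by
        intro i hi
        have : i ≠ J := by
          rintro rfl
          have := j.2
          simp [hJ] at hi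
          omega
        simp [E1, this]
      refine ⟨(odd_iff _).2 hodd, ?_, ?_⟩
      · refine le_antisymm (Nat.sInf_le ⟨E1 J, wt_E1 J, by rw [hRJ, hR]⟩) ?_
        refine le_csInf ⟨_, E1 J, wt_E1 J, rfl⟩ ?_
        rintro _ ⟨T, hT, rfl⟩
        exact hlow T hT
      · refine le_antisymm (Nat.sInf_le ⟨E1 J, wt_E1 J, hz0, by rw [hRJ, hR]⟩) ?_
        refine le_csInf ⟨_, E1 J, wt_E1 J, hz0, rfl⟩ ?_
        rintro _ ⟨T, hT, -, rfl⟩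
        exact hlow T hT
  rw [hset, Set.ncard_image_of_injOn, Set.ncard_prod, lc_card c hc0 hcN, Set.ncard_univ]
  · simp
  · rintro ⟨i, R⟩ ⟨-, hR⟩ ⟨j, R'⟩ ⟨-, hR'⟩ h
    simp only [Set.mem_setOf_eq] at hR hR' h
    have hR1 := ((linComp_eq_iff _ c hc0 hcN).1 hR).1
    have hR1' := ((linComp_eq_iff _ c hc0 hcN).1 hR').1
    have hs : E1 (Fin.castLE hZ i) + E1 (Fin.castLE hZ j) = R + R' := by
      have h5 : (E1 (Fin.castLE hZ i) + R) + (R + E1 (Fin.castLE hZ j)) =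
        (E1 (Fin.castLE hZ j) + R') + (R + E1 (Fin.castLE hZ j)) := by rw [h]
      have a1 : (E1 (Fin.castLE hZ i) + R) + (R + E1 (Fin.castLE hZ j)) =
        E1 (Fin.castLE hZ i) + E1 (Fin.castLE hZ j) + (R + R) := by abel
      have a2 : (E1 (Fin.castLE hZ j) + R') + (R + E1 (Fin.castLE hZ j)) =
        R + R' + (E1 (Fin.castLE hZ j) + E1 (Fin.castLE hZ j)) := by abel
      rw [a1, a2, add_self_fn, add_self_fn, add_zero, add_zero] at h5
      exact h5
    have hD : DV (2^n - c) (E1 (Fin.castLE hZ i) + E1 (Fin.castLE hZ j)) := by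
      rw [hs]; exact hR1.add hR1'
    have hij := EE_ne s _ _ _ (by simp; omega) (by simp; omega) hm hD
    have hij' : i = j := by
      apply Fin.ext
      have := congrArg Fin.val hij
      simpa using this
    subst hij'
    have := add_left_cancel h
    rw [this]
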